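/- Fix an even integer d ≥ 2 and an integer n ≥ 2. The number of loopless generalized chord diagrams of order (n,d) that are invariant under the reflection i ↦ −i (mod n·d) (a reflection with exactly two fixed points, since n·d is even) equals Σ_{k=0}^{d/2−1} C(d(n−1)/2 − 1 − k, d/2 − 1 − k) · ã(d(n−1)/2, k; 2, d). -/

import Mathlib

/-- A generalized linear diagram on points `1,…,N` whose blocks all have size `d`:
a partition of `{1,…,N}` into blocks of size `d`. -/
def IsLinearDiagram (N d : ℕ) (P : Finset (Finset ℕ)) : Prop :=
  (∀ b ∈ P, b.card = d) ∧ (∀ b ∈ P, ∀ x ∈ b, x ∈ Finset.Icc 1 N) ∧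
    ∀ x ∈ Finset.Icc 1 N, ∃! b : Finset ℕ, b ∈ P ∧ x ∈ b

/-- The number of loops of a linear diagram on points `1,…,N`: indices `i` with
`1 ≤ i ≤ N - 1` such that `i` and `i + 1` lie in the same block. -/
noncomputable def linLoops (N : ℕ) (P : Finset (Finset ℕ)) : ℕ :=
  Set.ncard {i : ℕ | 1 ≤ i ∧ i + 1 ≤ N ∧ ∃ b ∈ P, i ∈ b ∧ i + 1 ∈ b}

/-- `numA d n k` : the number of generalized linear diagrams of order `(n,d)`
with exactly `k` loops. -/
noncomputable def numA (d n k : ℕ) : ℕ :=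
  Set.ncard {P : Finset (Finset ℕ) | IsLinearDiagram (n * d) d P ∧ linLoops (n * d) P = k}

/-- `numA` with an integer loop index, zero for negative indices. -/
noncomputable def numAZ (d n : ℕ) (k : ℤ) : ℕ :=
  if 0 ≤ k then numA d n k.toNat else 0

/-- Binomial coefficient with integer arguments: `0` when `y < 0` or `y > x`. -/
def iChoose (x y : ℤ) : ℕ :=
  if 0 ≤ y ∧ y ≤ x then x.toNat.choose y.toNat else 0

/-- A generalized chord diagram on `ZMod N` whose blocks all have size `d`:
a partition of `ZMod N` into blocks of size `d`. -/
def IsChordDiagram (N d : ℕ) (P : Finset (Finset (ZMod N))) : Prop :=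
  (∀ b ∈ P, b.card = d) ∧ ∀ x : ZMod N, ∃! b : Finset (ZMod N), b ∈ P ∧ x ∈ b

/-- A chord diagram is loopless if no residues `i`, `i+1` lie in the same block. -/
def ChordLoopless (N : ℕ) (P : Finset (Finset (ZMod N))) : Prop :=
  ∀ i : ZMod N, ∀ b ∈ P, i ∈ b → i + 1 ∈ b → False

/-- `numB d n` : the number of loopless generalized chord diagrams of order `(n,d)`. -/
noncomputable def numB (d n : ℕ) : ℕ :=
  Set.ncard {P : Finset (Finset (ZMod (n * d))) |
    IsChordDiagram (n * d) d P ∧ ChordLoopless (n * d) P}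

/-- The shift `i ↦ i + v` modulo `M`, on the representatives `1,…,M`. -/
def shiftMod (M v i : ℕ) : ℕ := if i + v ≤ M then i + v else i + v - M

/-- An `m`-symmetric linear diagram with sector size `v` and blocks of size `d`:
a partition of `{1,…,m·v}` into blocks of size `d` invariant under the shift by `v`
modulo `m·v`. -/
def IsMSymLinear (d m v : ℕ) (P : Finset (Finset ℕ)) : Prop :=
  IsLinearDiagram (m * v) d P ∧ ∀ b ∈ P, b.image (shiftMod (m * v) v) ∈ P

/-- The number of loops lying in sector `s` (sectors numbered from `0`):
indices `i` with `s·v + 1 ≤ i ≤ (s+1)·v - 1` such that `i` and `i + 1` lie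
in the same block. -/
noncomputable def sectorLoops (v : ℕ) (P : Finset (Finset ℕ)) (s : ℕ) : ℕ :=
  Set.ncard {i : ℕ | s * v + 1 ≤ i ∧ i + 1 ≤ (s + 1) * v ∧ ∃ b ∈ P, i ∈ b ∧ i + 1 ∈ b}

/-- `numAtil d m v k` : the number of `m`-symmetric linear diagrams with sector size `v`,
blocks of size `d`, and exactly `k` loops in each sector (`ã(v,k;m,d)`). -/
noncomputable def numAtil (d m v k : ℕ) : ℕ :=
  Set.ncard {P : Finset (Finset ℕ) |
    IsMSymLinear d m v P ∧ ∀ s < m, sectorLoops v P s = k}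
open Finset

def ee (T : Finset ℕ) (j : ℕ) : ℕ := j + (T.filter (· < j)).card

lemma ee_succ_mem {T : Finset ℕ} {j : ℕ} (h : j ∈ T) : ee T (j+1) = ee T j + 2 := by
  unfold ee
  have : T.filter (· < j+1) = insert j (T.filter (· < j)) := by
    ext x; simp only [mem_filter, mem_insert]
    constructor
    · rintro ⟨h1, h2⟩
      rcases Nat.lt_succ_iff_lt_or_eq.1 h2 with h3 | h3
      · exact Or.inr ⟨h1, h3⟩
      · exact Or.inl h3
    · rintro (rfl | ⟨h1, h2⟩)
      · exact ⟨h, by omega⟩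
      · exact ⟨h1, by omega⟩
  rw [this, card_insert_of_notMem (by simp)]; omega

lemma ee_succ_not {T : Finset ℕ} {j : ℕ} (h : j ∉ T) : ee T (j+1) = ee T j + 1 := by
  unfold ee
  have : T.filter (· < j+1) = T.filter (· < j) := by
    ext x; simp only [mem_filter]
    constructor
    · rintro ⟨h1, h2⟩
      refine ⟨h1, ?_⟩
      have : x ≠ j := by rintro rfl; exact h h1
      omega
    · rintro ⟨h1, h2⟩
      exact ⟨h1, by omega⟩
  rw [this]; omega

lemma ee_strictMono (T : Finset ℕ) : StrictMono (ee T) := by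
  apply strictMono_nat_of_lt_succ
  intro j
  by_cases h : j ∈ T
  · rw [ee_succ_mem h]; omega
  · rw [ee_succ_not h]; omega

/-- admissible gap sets -/
def GS (v h : ℕ) (T : Finset ℕ) : Prop := T ⊆ Icc 1 (v-1) ∧ T.card + 1 = h

lemma ee_one {v h : ℕ} {T : Finset ℕ} (hT : GS v h T) : ee T 1 = 1 := by
  have : T.filter (· < 1) = ∅ := by
    ext x; simp only [mem_filter, notMem_empty, iff_false]
    rintro ⟨h1, h2⟩
    have := mem_Icc.1 (hT.1 h1); omega
  rw [ee, this]; rfl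

lemma ee_last {v h : ℕ} {T : Finset ℕ} (hv : 1 ≤ v) (hT : GS v h T) : ee T v + 1 = v + h := by
  have : T.filter (· < v) = T := by
    apply filter_true_of_mem
    intro x hx
    have := mem_Icc.1 (hT.1 hx); omega
  have h2 := hT.2
  simp only [ee, this]; omega

lemma ee_bd {v h : ℕ} {T : Finset ℕ} (hv : 1 ≤ v) (hT : GS v h T) {j : ℕ} (h1 : 1 ≤ j) (h2 : j ≤ v) :
    1 ≤ ee T j ∧ ee T j + 1 ≤ v + h := by
  have a := (ee_strictMono T).monotone h1
  have b := (ee_strictMono T).monotone h2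
  rw [ee_one hT] at a
  have := ee_last hv hT
  omega

lemma ee_cover {v h : ℕ} {T : Finset ℕ} (hv : 1 ≤ v) (hT : GS v h T) (a : ℕ) (h1 : 1 ≤ a)
    (h2 : a + 1 ≤ v + h) : (∃ j, 1 ≤ j ∧ j ≤ v ∧ ee T j = a) ∨ ∃ t ∈ T, a = ee T t + 1 := by
  induction a, h1 using Nat.le_induction with
  | base => exact Or.inl ⟨1, le_rfl, hv, ee_one hT⟩
  | succ a ha ih =>
    rcases ih (by omega) with ⟨j, j1, j2, j3⟩ | ⟨t, t1, t2⟩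
    · by_cases hj : j ∈ T
      · exact Or.inr ⟨j, hj, by omega⟩
      · have : j ≠ v := by
          rintro rfl
          have := ee_last hv hT; omega
        exact Or.inl ⟨j+1, by omega, by omega, by rw [ee_succ_not hj]; omega⟩
    · have := mem_Icc.1 (hT.1 t1)
      exact Or.inl ⟨t+1, by omega, by omega, by rw [ee_succ_mem t1]; omega⟩

lemma ee_ne {T : Finset ℕ} {t : ℕ} (ht : t ∈ T) (j : ℕ) : ee T j ≠ ee T t + 1 := by
  rcases le_or_gt j t with h | h
  · have := (ee_strictMono T).monotone h; omega
  · have := (ee_strictMono T).monotone (show t + 1 ≤ j from h)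
    rw [ee_succ_mem ht] at this; omega

lemma ee_next {T : Finset ℕ} {j j' : ℕ} (h : ee T j' = ee T j + 1) : j' = j + 1 ∧ j ∉ T := by
  have hj : j ∉ T := fun hj => ee_ne hj _ h
  refine ⟨?_, hj⟩
  rw [← ee_succ_not hj] at h
  exact (ee_strictMono T).injective h

/-- constructing the gap set -/
lemma exists_gap {v h : ℕ} (S : Finset ℕ) (hS : ∀ s ∈ S, 2 ≤ s ∧ s + 2 ≤ v + h)
    (hS2 : ∀ s ∈ S, s + 1 ∉ S) (hc : S.card + 1 = h) :
    ∃ T, GS v h T ∧ ∀ a, (∃ t ∈ T, a = ee T t + 1) ↔ a ∈ S := by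
  set c : ℕ → ℕ := fun s => (S.filter (· < s)).card with hcdef
  have key : ∀ s ∈ S, ∀ s' ∈ S, s < s' → c s' + s + 1 ≤ c s + s' := by
    intro s hs s' hs' hlt
    have : S.filter (· < s') ⊆ S.filter (· < s) ∪ Ico s (s'-1) := by
      intro x hx
      rw [mem_filter] at hx
      rw [mem_union, mem_filter, mem_Ico]
      by_cases hxs : x < s
      · exact Or.inl ⟨hx.1, hxs⟩
      · right
        refine ⟨by omega, ?_⟩
        have : x + 1 ≠ s' := by
          rintro rfl; exact hS2 x hx.1 hs'
        omega
    have := (card_le_card this).trans (card_union_le _ _)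
    rw [Nat.card_Ico] at this
    simp only [hcdef]; omega
  have low : ∀ s ∈ S, c s + 2 ≤ s := by
    intro s hs
    have : S.filter (· < s) ⊆ Ico 2 s := by
      intro x hx
      rw [mem_filter] at hx
      exact mem_Ico.2 ⟨(hS x hx.1).1, hx.2⟩
    have := card_le_card this
    rw [Nat.card_Ico] at this
    have := (hS s hs).1
    simp only [hcdef]; omega
  have up : ∀ s ∈ S, s ≤ c s + v := by
    intro s hs
    have : S ⊆ S.filter (· < s) ∪ Icc s (v+h-2) := by
      intro x hx
      rw [mem_union, mem_filter, mem_Icc]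
      have := (hS x hx).2
      by_cases hxs : x < s
      · exact Or.inl ⟨hx, hxs⟩
      · right; omega
    have := (card_le_card this).trans (card_union_le _ _)
    rw [Nat.card_Icc] at this
    have := (hS s hs).2
    simp only [hcdef]; omega
  set f : ℕ → ℕ := fun s => s - 1 - c s with hf
  have fm : ∀ s ∈ S, ∀ s' ∈ S, s < s' → f s < f s' := by
    intro s hs s' hs' hlt
    have := key s hs s' hs' hlt
    have := low s hs
    have := low s' hs'
    simp only [hf]; omega
  have fi : Set.InjOn f (S : Set ℕ) := by
    intro s hs s' hs' he
    rcases lt_trichotomy s s' with h | h | h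
    · have := fm s hs s' hs' h; omega
    · exact h
    · have := fm s' hs' s hs h; omega
  have fe : ∀ s ∈ S, s = ee (S.image f) (f s) + 1 := by
    intro s hs
    have : (S.image f).filter (· < f s) = (S.filter (· < s)).image f := by
      ext x
      simp only [mem_filter, mem_image]
      constructor
      · rintro ⟨⟨y, hy, rfl⟩, h2⟩
        refine ⟨y, ⟨hy, ?_⟩, rfl⟩
        by_contra hle
        rcases lt_or_eq_of_le (not_lt.1 hle) with h3 | h3
        · have := fm s hs y hy h3; omega
        · subst h3; omega
      · rintro ⟨y, ⟨hy, h1⟩, rfl⟩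
        exact ⟨⟨y, hy, rfl⟩, fm y hy s hs h1⟩
    unfold ee
    rw [this, card_image_of_injOn (fi.mono (coe_subset.2 (filter_subset _ _)))]
    have := low s hs
    change s = (s - 1 - c s) + c s + 1
    omega
  refine ⟨S.image f, ⟨?_, ?_⟩, ?_⟩
  · intro x hx
    obtain ⟨s, hs, rfl⟩ := mem_image.1 hx
    have := low s hs
    have := up s hs
    rw [mem_Icc]; simp only [hf]; omega
  · rw [card_image_of_injOn fi, hc]
  · intro a
    constructor
    · rintro ⟨t, ht, rfl⟩
      obtain ⟨s, hs, rfl⟩ := mem_image.1 ht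
      rw [← fe s hs]; exact hs
    · intro ha
      exact ⟨f a, mem_image_of_mem f ha, fe a ha⟩

lemma card_sup {α : Type*} [DecidableEq α] (U L : Finset α) (r : ℕ) (hL : L ⊆ U) :
    ((U.powersetCard r).filter (L ⊆ ·)).card = if L.card ≤ r then (U.card - L.card).choose (r - L.card) else 0 := by
  split_ifs with h
  · rw [← card_sdiff_of_subset hL, ← card_powersetCard]
    apply card_bij (fun T _ => T \ L)
    · intro T hT
      simp only [mem_filter, mem_powersetCard] at hT ⊢
      refine ⟨sdiff_subset_sdiff hT.1.1 le_rfl, ?_⟩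
      rw [card_sdiff_of_subset hT.2, hT.1.2]
    · intro T hT T' hT' he
      simp only [mem_filter, mem_powersetCard] at hT hT'
      rw [← sdiff_union_of_subset hT.2, he, sdiff_union_of_subset hT'.2]
    · intro T hT
      simp only [mem_powersetCard] at hT
      have hd : Disjoint T L := disjoint_of_subset_left hT.1 sdiff_disjoint
      refine ⟨T ∪ L, ?_, ?_⟩
      · simp only [mem_filter, mem_powersetCard]
        refine ⟨⟨union_subset (hT.1.trans sdiff_subset) hL, ?_⟩, subset_union_right⟩
        rw [card_union_of_disjoint hd, hT.2]; omega
      · rw [union_sdiff_right, sdiff_eq_self_of_disjoint hd]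
  · rw [card_eq_zero, filter_eq_empty_iff]
    intro T hT hLT
    have := card_le_card hLT
    rw [(mem_powersetCard.1 hT).2] at this
    omega

lemma zm_eq {N w a b : ℕ} (hN : N = 2 * w) (hw : 1 ≤ w) (ha : a ≤ w) (hb : b ≤ w)
    (h : (a : ZMod N) = b) : a = b := by
  rw [ZMod.natCast_eq_natCast_iff'] at h
  rwa [Nat.mod_eq_of_lt (by omega), Nat.mod_eq_of_lt (by omega)] at h

lemma zm_neg {N w a b : ℕ} (hN : N = 2 * w) (ha : a ≤ w) (hb : b ≤ w)
    (h : (a : ZMod N) = -b) : a + b = 0 ∨ (a = w ∧ b = w) := by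
  have : ((a + b : ℕ) : ZMod N) = 0 := by push_cast; rw [h]; ring
  rw [ZMod.natCast_eq_zero_iff] at this
  obtain ⟨c, hc⟩ := this
  rcases c with _ | _ | c
  · left; omega
  · right; omega
  · left
    have : N * (c+1+1) = N * c + 2 * N := by ring
    have := Nat.zero_le (N * c)
    omega

lemma zm_cases {N w : ℕ} (hN : N = 2 * w) (hw : 1 ≤ w) (x : ZMod N) :
    ∃ a, a < w ∧ (x = (a : ZMod N) ∨ x = -((a + 1 : ℕ) : ZMod N)) := by
  have : NeZero N := ⟨by omega⟩
  have hx := ZMod.val_lt x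
  have hv : ((x.val : ℕ) : ZMod N) = x := ZMod.natCast_zmod_val x
  by_cases h : x.val < w
  · exact ⟨x.val, h, Or.inl hv.symm⟩
  · refine ⟨N - 1 - x.val, by omega, Or.inr ?_⟩
    rw [eq_neg_iff_add_eq_zero]
    nth_rw 1 [← hv]
    rw [← Nat.cast_add, ZMod.natCast_eq_zero_iff]
    exact ⟨1, by omega⟩

lemma zm_mid {N w : ℕ} (hN : N = 2 * w) : -(w : ZMod N) = w := by
  rw [neg_eq_iff_add_eq_zero, ← Nat.cast_add, ZMod.natCast_eq_zero_iff]
  exact ⟨1, by omega⟩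

def ph (N v : ℕ) (T : Finset ℕ) (j : ℕ) : ZMod N :=
  if j ≤ v then (ee T j : ZMod N) else -(ee T (j - v) : ZMod N)

section
variable {N v h : ℕ} {T : Finset ℕ}

lemma ph_nat (hN : N = 2 * (v + h)) (hv : 1 ≤ v) (hT : GS v h T) {j a : ℕ}
    (hj : j ∈ Icc 1 (2 * v)) (ha : a ≤ v + h) (he : ph N v T j = a) : j ≤ v ∧ ee T j = a := by
  rw [mem_Icc] at hj
  unfold ph at he
  split_ifs at he with h1
  · have := ee_bd hv hT hj.1 h1
    exact ⟨h1, zm_eq hN (by omega) (by omega) ha he⟩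
  · have := ee_bd hv hT (show 1 ≤ j - v by omega) (by omega)
    have := zm_neg hN ha (by omega) he.symm
    omega

lemma ph_shift {j : ℕ} (hj : j ∈ Icc 1 (2 * v)) :
    ph N v T (shiftMod (2 * v) v j) = - ph N v T j := by
  rw [mem_Icc] at hj
  by_cases h1 : j ≤ v
  · have : shiftMod (2 * v) v j = j + v := by unfold shiftMod; rw [if_pos (by omega)]
    rw [this]; unfold ph
    by_cases h2 : j = 0
    · omega
    · rw [if_neg (by omega), if_pos h1]; simp
  · have : shiftMod (2 * v) v j = j - v := by unfold shiftMod; rw [if_neg (by omega)]; omega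
    rw [this]; unfold ph
    rw [if_pos (by omega), if_neg h1, neg_neg]

lemma shift_mem {j : ℕ} (hj : j ∈ Icc 1 (2 * v)) : shiftMod (2 * v) v j ∈ Icc 1 (2 * v) := by
  rw [mem_Icc] at *
  unfold shiftMod; split_ifs <;> omega

lemma shift_shift {j : ℕ} (hj : j ∈ Icc 1 (2 * v)) :
    shiftMod (2 * v) v (shiftMod (2 * v) v j) = j := by
  rw [mem_Icc] at *
  unfold shiftMod; split_ifs <;> omega

lemma ph_inj (hN : N = 2 * (v + h)) (hv : 1 ≤ v) (hT : GS v h T) :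
    Set.InjOn (ph N v T) (Icc 1 (2 * v) : Finset ℕ) := by
  have base : ∀ j ∈ Icc 1 (2 * v), ∀ j' ∈ Icc 1 (2 * v), j ≤ v → ph N v T j = ph N v T j' →
      j = j' := by
    intro j hj j' hj' h1 he
    have hb := ee_bd hv hT (mem_Icc.1 hj).1 h1
    have : ph N v T j = (ee T j : ℕ) := by rw [ph, if_pos h1]
    have := ph_nat hN hv hT hj' (by omega) (he.symm.trans this)
    exact ((ee_strictMono T).injective this.2).symm
  intro j hj j' hj' he
  rw [mem_coe] at hj hj'
  by_cases h1 : j ≤ v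
  · exact base j hj j' hj' h1 he
  · have := base _ (shift_mem hj) _ (shift_mem hj')
      (by have := mem_Icc.1 hj; unfold shiftMod; split_ifs <;> omega)
      (by rw [ph_shift hj, ph_shift hj', he])
    rw [← shift_shift hj, this, shift_shift hj']

def RR (N v : ℕ) (T : Finset ℕ) : Finset (ZMod N) := (Icc 1 (2 * v)).image (ph N v T)

lemma RR_nat (hN : N = 2 * (v + h)) (hv : 1 ≤ v) (hT : GS v h T) {a : ℕ} (ha : a ≤ v + h) :
    (a : ZMod N) ∈ RR N v T ↔ ∃ j, 1 ≤ j ∧ j ≤ v ∧ ee T j = a := by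
  unfold RR
  rw [mem_image]
  constructor
  · rintro ⟨j, hj, he⟩
    have := ph_nat hN hv hT hj ha he
    exact ⟨j, (mem_Icc.1 hj).1, this.1, this.2⟩
  · rintro ⟨j, h1, h2, rfl⟩
    exact ⟨j, mem_Icc.2 ⟨h1, by omega⟩, by rw [ph, if_pos h2]⟩

lemma RR_neg {x : ZMod N} : -x ∈ RR N v T ↔ x ∈ RR N v T := by
  have : ∀ x : ZMod N, x ∈ RR N v T → -x ∈ RR N v T := by
    intro x hx
    obtain ⟨j, hj, rfl⟩ := mem_image.1 hx
    rw [← ph_shift hj]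
    exact mem_image_of_mem _ (shift_mem hj)
  exact ⟨fun h => by simpa using this _ h, this x⟩

lemma RR_card (hN : N = 2 * (v + h)) (hv : 1 ≤ v) (hT : GS v h T) : (RR N v T).card = 2 * v := by
  rw [RR, card_image_of_injOn (ph_inj hN hv hT)]; simp

variable [NeZero N]

def BB (N v : ℕ) [NeZero N] (T : Finset ℕ) : Finset (ZMod N) := univ \ RR N v T

lemma mem_BB {x : ZMod N} : x ∈ BB N v T ↔ x ∉ RR N v T := by simp [BB]

lemma BB_neg {x : ZMod N} : -x ∈ BB N v T ↔ x ∈ BB N v T := by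
  rw [mem_BB, mem_BB, RR_neg]

lemma BB_card (hN : N = 2 * (v + h)) (hv : 1 ≤ v) (hT : GS v h T) : (BB N v T).card = 2 * h := by
  rw [BB, card_univ_sdiff, RR_card hN hv hT, ZMod.card]; omega

lemma zero_BB (hN : N = 2 * (v + h)) (hv : 1 ≤ v) (hT : GS v h T) : 0 ∈ BB N v T := by
  rw [mem_BB, ← Nat.cast_zero, RR_nat hN hv hT (by omega)]
  rintro ⟨j, h1, h2, h3⟩
  have := ee_bd hv hT h1 h2; omega

lemma BB_gap (hN : N = 2 * (v + h)) (hv : 1 ≤ v) (hT : GS v h T) {j : ℕ} (h1 : 1 ≤ j)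
    (h2 : j + 1 ≤ v) : ((ee T j + 1 : ℕ) : ZMod N) ∈ BB N v T ↔ j ∈ T := by
  have hb := ee_bd hv hT h1 (by omega)
  rw [mem_BB, RR_nat hN hv hT (by omega)]
  constructor
  · intro hh
    by_contra hj
    exact hh ⟨j+1, by omega, h2, ee_succ_not hj⟩
  · rintro hj ⟨j', _, _, h3⟩
    exact ee_ne hj _ h3

lemma BB_inj (hN : N = 2 * (v + h)) (hv : 1 ≤ v) (hT : GS v h T) {T' : Finset ℕ}
    (hT' : GS v h T') (he : BB N v T = BB N v T') : T = T' := by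
  have key : ∀ j, 1 ≤ j → j + 1 ≤ v → ee T j = ee T' j → (j ∈ T ↔ j ∈ T') := by
    intro j h1 h2 h3
    rw [← BB_gap hN hv hT h1 h2, ← BB_gap hN hv hT' h1 h2, he, h3]
  have e : ∀ j, 1 ≤ j → j ≤ v → ee T j = ee T' j := by
    intro j h1
    induction j, h1 using Nat.le_induction with
    | base => intro _; rw [ee_one hT, ee_one hT']
    | succ j hj ih =>
      intro h2
      have i := ih (by omega)
      have k := key j hj h2 i
      by_cases hjT : j ∈ T
      · rw [ee_succ_mem hjT, ee_succ_mem (k.1 hjT), i]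
      · rw [ee_succ_not hjT, ee_succ_not (fun q => hjT (k.2 q)), i]
  ext j
  by_cases hj : 1 ≤ j ∧ j + 1 ≤ v
  · exact key j hj.1 hj.2 (e j hj.1 (by omega))
  · constructor
    · intro q; have := mem_Icc.1 (hT.1 q); omega
    · intro q; have := mem_Icc.1 (hT'.1 q); omega

lemma BB_noconsec (hN : N = 2 * (v + h)) (hv : 1 ≤ v) (hT : GS v h T) {a : ℕ} (ha : a < v + h)
    (h1 : (a : ZMod N) ∈ BB N v T) (h2 : ((a + 1 : ℕ) : ZMod N) ∈ BB N v T) : False := by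
  rw [mem_BB, RR_nat hN hv hT (by omega)] at h1 h2
  rcases Nat.eq_zero_or_pos a with rfl | h0
  · exact h2 ⟨1, le_rfl, hv, ee_one hT⟩
  by_cases hl : a + 1 = v + h
  · exact h1 ⟨v, hv, le_rfl, by have := ee_last hv hT; omega⟩
  rcases ee_cover hv hT a h0 (by omega) with h | ⟨t, t1, t2⟩
  · exact h1 h
  · have := mem_Icc.1 (hT.1 t1)
    exact h2 ⟨t+1, by omega, by omega, by rw [ee_succ_mem t1, t2]⟩

/-- existence of T for a symmetric block containing zero -/
lemma exists_BB (hN : N = 2 * (v + h)) (hv : 1 ≤ v) (hh : 1 ≤ h) (b : Finset (ZMod N))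
    (hc : b.card = 2 * h) (h0 : 0 ∈ b) (hneg : ∀ x ∈ b, -x ∈ b)
    (hl : ∀ x ∈ b, x + 1 ∉ b) : ∃ T, GS v h T ∧ BB N v T = b := by
  have hneg' : ∀ x, -x ∈ b ↔ x ∈ b := fun x => ⟨fun q => by simpa using hneg _ q, hneg x⟩
  set w := v + h with hw
  set S := (Ico 1 w).filter (fun a : ℕ => (a : ZMod N) ∈ b) with hS
  have mS : ∀ a : ℕ, a ∈ S ↔ (1 ≤ a ∧ a < w) ∧ (a : ZMod N) ∈ b := by
    intro a; rw [hS, mem_filter, mem_Ico]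
  have dec : b.filter (fun x => x ≠ 0 ∧ x ≠ (w : ZMod N)) =
      S.image (fun a : ℕ => (a : ZMod N)) ∪ S.image (fun a : ℕ => -(a : ZMod N)) := by
    ext x
    simp only [mem_filter, mem_union, mem_image]
    constructor
    · rintro ⟨h1, h2, h3⟩
      obtain ⟨a, ha, rfl | rfl⟩ := zm_cases hN (by omega) x
      · left
        have : a ≠ 0 := by rintro rfl; simp at h2
        exact ⟨a, (mS a).2 ⟨⟨by omega, ha⟩, h1⟩, rfl⟩
      · right
        have : a + 1 ≠ w := by
          intro q; rw [q, zm_mid hN] at h3; exact h3 rfl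
        exact ⟨a+1, (mS _).2 ⟨⟨by omega, by omega⟩, (hneg' _).1 h1⟩, rfl⟩
    · rintro (⟨a, ha, rfl⟩ | ⟨a, ha, rfl⟩)
      · rw [mS] at ha
        refine ⟨ha.2, ?_, ?_⟩
        · intro q; rw [← Nat.cast_zero] at q
          have := zm_eq hN (by omega) (by omega) (by omega) q; omega
        · intro q
          have := zm_eq hN (by omega) (by omega) (by omega) q; omega
      · rw [mS] at ha
        refine ⟨hneg _ ha.2, ?_, ?_⟩
        · intro q; rw [neg_eq_zero, ← Nat.cast_zero] at q
          have := zm_eq hN (by omega) (by omega) (by omega) q; omega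
        · intro q
          have := zm_neg hN (by omega) (by omega) q.symm; omega
  have c1 : (b.filter (fun x => x ≠ 0 ∧ x ≠ (w : ZMod N))).card = 2 * S.card := by
    rw [dec, card_union_of_disjoint, card_image_of_injOn, card_image_of_injOn]
    · ring
    · intro x hx y hy q
      have hx := (mS x).1 hx
      have hy := (mS y).1 hy
      exact zm_eq hN (by omega) (by omega) (by omega) (neg_injective q)
    · intro x hx y hy q
      have hx := (mS x).1 hx
      have hy := (mS y).1 hy
      exact zm_eq hN (by omega) (by omega) (by omega) q
    · rw [disjoint_left]
      intro x hx hx'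
      obtain ⟨a, ha, rfl⟩ := mem_image.1 hx
      obtain ⟨c, hc, q⟩ := mem_image.1 hx'
      have ha := (mS _).1 ha
      have hc := (mS _).1 hc
      have := zm_neg hN (by omega) (by omega) q.symm
      omega
  have zw : (w : ZMod N) ≠ 0 := by
    intro q; rw [← Nat.cast_zero] at q
    have := zm_eq hN (by omega) (by omega) (by omega) q; omega
  have c2 := card_filter_add_card_filter_not (s := b) (fun x => x ≠ 0 ∧ x ≠ (w : ZMod N))
  have hwb : (w : ZMod N) ∈ b := by
    by_contra q
    have : b.filter (fun x => ¬ (x ≠ 0 ∧ x ≠ (w : ZMod N))) = {0} := by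
      ext x
      simp only [mem_filter, mem_singleton]
      constructor
      · rintro ⟨h1, h2⟩
        by_contra h3
        exact h2 ⟨h3, fun h4 => q (h4 ▸ h1)⟩
      · rintro rfl; exact ⟨h0, fun q => q.1 rfl⟩
    rw [this, c1, card_singleton, hc] at c2; omega
  have c3 : b.filter (fun x => ¬ (x ≠ 0 ∧ x ≠ (w : ZMod N))) = {0, (w : ZMod N)} := by
    ext x
    simp only [mem_filter, mem_singleton, mem_insert]
    constructor
    · rintro ⟨h1, h2⟩
      by_contra h3
      push Not at h3
      exact h2 h3
    · rintro (rfl | rfl)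
      · exact ⟨h0, fun q => q.1 rfl⟩
      · exact ⟨hwb, fun q => q.2 rfl⟩
  rw [c3, c1, card_pair zw.symm, hc] at c2
  obtain ⟨T, hT, hTS⟩ := exists_gap (v := v) (h := h) S (by
    intro s hs
    rw [mS] at hs
    constructor
    · by_contra q
      have : s = 1 := by omega
      subst this
      exact hl 0 h0 (by simpa using hs.2)
    · by_contra q
      have : s + 1 = w := by omega
      apply hl _ hs.2
      rw [← Nat.cast_succ, Nat.succ_eq_add_one, this]; exact hwb) (by
    intro s hs hs'
    rw [mS] at hs hs'
    apply hl _ hs.2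
    rw [← Nat.cast_succ]; exact hs'.2) (by omega)
  refine ⟨T, hT, ?_⟩
  have main : ∀ a : ℕ, a ≤ w → ((a : ZMod N) ∈ BB N v T ↔ (a : ZMod N) ∈ b) := by
    intro a ha
    rw [mem_BB, RR_nat hN hv hT ha]
    rcases Nat.eq_zero_or_pos a with rfl | hp
    · simp only [Nat.cast_zero, h0, iff_true]
      rintro ⟨j, h1, h2, h3⟩
      have := ee_bd hv hT h1 h2; omega
    by_cases hl : a = w
    · subst hl
      simp only [hwb, iff_true]
      rintro ⟨j, h1, h2, h3⟩
      have := ee_bd hv hT h1 h2; omega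
    have : (a : ZMod N) ∈ b ↔ a ∈ S := by
      rw [mS]; exact ⟨fun q => ⟨by omega, q⟩, fun q => q.2⟩
    rw [this, ← hTS]
    constructor
    · intro q
      exact (ee_cover hv hT a hp (by omega)).resolve_left q
    · rintro ⟨t, t1, rfl⟩ ⟨j, _, _, h3⟩
      exact ee_ne t1 _ h3
  ext x
  obtain ⟨a, ha, rfl | rfl⟩ := zm_cases hN (by omega) x
  · exact main a (by omega)
  · rw [BB_neg, hneg']; exact main (a+1) (by omega)
end

/-- loops in sector zero -/
def LL (v : ℕ) (Q : Finset (Finset ℕ)) : Finset ℕ :=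
  (Icc 1 (v-1)).filter (fun i => ∃ b ∈ Q, i ∈ b ∧ i + 1 ∈ b)

def FF (N v : ℕ) [NeZero N] (p : Finset (Finset ℕ) × Finset ℕ) : Finset (Finset (ZMod N)) :=
  insert (BB N v p.2) (p.1.image (fun q => q.image (ph N v p.2)))

section
variable {N v h : ℕ} [NeZero N]

lemma sub_Icc {d : ℕ} {Q : Finset (Finset ℕ)} (hQ : IsMSymLinear d 2 v Q) {q : Finset ℕ} (hq : q ∈ Q) :
    q ⊆ Icc 1 (2 * v) := fun x hx => hQ.1.2.1 q hq x hx

lemma img_sub {d : ℕ} {Q : Finset (Finset ℕ)} {T : Finset ℕ} (hQ : IsMSymLinear d 2 v Q)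
    {q : Finset ℕ} (hq : q ∈ Q) : q.image (ph N v T) ⊆ RR N v T :=
  image_subset_image (sub_Icc hQ hq)

lemma FF_mem (hN : N = 2 * (v + h)) (hv : 1 ≤ v)
    {Q : Finset (Finset ℕ)} {T : Finset ℕ} (hQ : IsMSymLinear (2 * h) 2 v Q) (hT : GS v h T)
    (hL : LL v Q ⊆ T) :
    IsChordDiagram N (2 * h) (FF N v (Q, T)) ∧ ChordLoopless N (FF N v (Q, T)) ∧
          ∀ b ∈ FF N v (Q, T), b.image (fun i => -i) ∈ FF N v (Q, T) := by
  have mF : ∀ b, b ∈ FF N v (Q, T) ↔ b = BB N v T ∨ ∃ q ∈ Q, q.image (ph N v T) = b := by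
    intro b; simp [FF]
  have inj := ph_inj hN hv hT
  have sym : ∀ b ∈ FF N v (Q, T), b.image (fun i => -i) ∈ FF N v (Q, T) := by
    intro b hb
    rw [mF] at hb
    rcases hb with rfl | ⟨q, hq, rfl⟩
    · rw [mF]; left
      ext x
      rw [mem_image]
      constructor
      · rintro ⟨y, hy, rfl⟩; exact BB_neg.2 hy
      · intro hx; exact ⟨-x, BB_neg.2 hx, neg_neg x⟩
    · rw [mF]; right
      refine ⟨_, hQ.2 q hq, ?_⟩
      rw [image_image, image_image]
      apply image_congr
      intro j hj
      exact ph_shift (sub_Icc hQ hq hj)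
  refine ⟨⟨?_, ?_⟩, ?_, sym⟩
  · intro b hb
    rw [mF] at hb
    rcases hb with rfl | ⟨q, hq, rfl⟩
    · exact BB_card hN hv hT
    · rw [card_image_of_injOn (inj.mono (coe_subset.2 (sub_Icc hQ hq)))]
      exact hQ.1.1 q hq
  · intro x
    by_cases hx : x ∈ RR N v T
    · obtain ⟨j, hj, rfl⟩ := mem_image.1 hx
      obtain ⟨q, ⟨hq, hjq⟩, hu⟩ := hQ.1.2.2 j hj
      refine ⟨q.image (ph N v T), ⟨(mF _).2 (Or.inr ⟨q, hq, rfl⟩), mem_image_of_mem _ hjq⟩, ?_⟩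
      rintro b ⟨hb, hxb⟩
      rw [mF] at hb
      rcases hb with rfl | ⟨q', hq', rfl⟩
      · exact absurd hx (mem_BB.1 hxb)
      · obtain ⟨j', hj', he⟩ := mem_image.1 hxb
        have : j' = j := inj (mem_coe.2 (sub_Icc hQ hq' hj')) (mem_coe.2 hj) he
        subst this
        rw [hu q' ⟨hq', hj'⟩]
    · refine ⟨BB N v T, ⟨(mF _).2 (Or.inl rfl), mem_BB.2 hx⟩, ?_⟩
      rintro b ⟨hb, hxb⟩
      rw [mF] at hb
      rcases hb with rfl | ⟨q', hq', rfl⟩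
      · rfl
      · exact absurd (img_sub hQ hq' hxb) hx
  · have main : ∀ a : ℕ, a < v + h → ∀ b ∈ FF N v (Q, T), (a : ZMod N) ∈ b →
        ((a + 1 : ℕ) : ZMod N) ∈ b → False := by
      intro a ha b hb h1 h2
      rw [mF] at hb
      rcases hb with rfl | ⟨q, hq, rfl⟩
      · exact BB_noconsec hN hv hT ha h1 h2
      · obtain ⟨j, hj, he⟩ := mem_image.1 h1
        obtain ⟨j', hj', he'⟩ := mem_image.1 h2
        have e1 := ph_nat hN hv hT (sub_Icc hQ hq hj) (by omega) he
        have e2 := ph_nat hN hv hT (sub_Icc hQ hq hj') (by omega) he'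
        obtain ⟨rfl, hjT⟩ := ee_next (e2.2.trans (by rw [e1.2]))
        apply hjT
        apply hL
        have := mem_Icc.1 (sub_Icc hQ hq hj)
        exact mem_filter.2 ⟨mem_Icc.2 ⟨by omega, by omega⟩, q, hq, hj, hj'⟩
    intro x b hb h1 h2
    obtain ⟨a, ha, rfl | rfl⟩ := zm_cases hN (by omega) x
    · exact main a ha b hb h1 (by push_cast; exact h2)
    · refine main a ha _ (sym b hb) ?_ ?_
      · refine mem_image.2 ⟨_, h2, ?_⟩
        push_cast; ring
      · exact mem_image.2 ⟨_, h1, neg_neg _⟩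

lemma FF_inj (hN : N = 2 * (v + h)) (hv : 1 ≤ v) (hh : 1 ≤ h)
    {Q Q' : Finset (Finset ℕ)} {T T' : Finset ℕ} (hQ : IsMSymLinear (2 * h) 2 v Q) (hT : GS v h T)
    (hQ' : IsMSymLinear (2 * h) 2 v Q') (hT' : GS v h T')
    (he : FF N v (Q, T) = FF N v (Q', T')) : Q = Q' ∧ T = T' := by
  have mF : ∀ Q T b, b ∈ FF N v (Q, T) ↔ b = BB N v T ∨ ∃ q ∈ Q, q.image (ph N v T) = b := by
    intro Q T b; simp [FF]
  have hB : BB N v T = BB N v T' := by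
    have : BB N v T ∈ FF N v (Q', T') := by rw [← he, mF]; exact Or.inl rfl
    rw [mF] at this
    rcases this with h1 | ⟨q, hq, h1⟩
    · exact h1
    · have z := zero_BB hN hv hT
      rw [← h1] at z
      exact absurd (img_sub hQ' hq z) (mem_BB.1 (zero_BB hN hv hT'))
  have hTT := BB_inj hN hv hT hT' hB
  subst hTT
  refine ⟨?_, rfl⟩
  have inj := ph_inj hN hv hT
  have sub : ∀ Q Q', IsMSymLinear (2 * h) 2 v Q → IsMSymLinear (2 * h) 2 v Q' →
      FF N v (Q, T) = FF N v (Q', T) → Q ⊆ Q' := by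
    intro Q Q' hQ hQ' he q hq
    have : q.image (ph N v T) ∈ FF N v (Q', T) := by rw [← he, mF]; exact Or.inr ⟨q, hq, rfl⟩
    rw [mF] at this
    rcases this with h1 | ⟨q', hq', h1⟩
    · have z := zero_BB hN hv hT
      have z' := z
      rw [← h1] at z
      exact absurd (img_sub hQ hq z) (mem_BB.1 z')
    · have : q' = q := by
        have s1 := sub_Icc hQ hq
        have s2 := sub_Icc hQ' hq'
        have := inj.image_eq_image_iff (coe_subset.2 s2) (coe_subset.2 s1)
        rw [← coe_image, ← coe_image, coe_inj, coe_inj] at this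
        exact this.1 h1
      exact this ▸ hq'
  exact subset_antisymm (sub _ _ hQ hQ' he) (sub _ _ hQ' hQ he.symm)

lemma FF_surj (hN : N = 2 * (v + h)) (hv : 1 ≤ v) (hh : 1 ≤ h) {P : Finset (Finset (ZMod N))}
    (hP : IsChordDiagram N (2 * h) P) (hl : ChordLoopless N P)
    (hs : ∀ b ∈ P, b.image (fun i => -i) ∈ P) :
    ∃ Q T, IsMSymLinear (2 * h) 2 v Q ∧ GS v h T ∧ LL v Q ⊆ T ∧ FF N v (Q, T) = P := by
  obtain ⟨b0, ⟨hb0, h0⟩, hu⟩ := hP.2 0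
  have uniq : ∀ x b b', b ∈ P → b' ∈ P → x ∈ b → x ∈ b' → b = b' := fun x b b' h1 h2 h3 h4 =>
    (hP.2 x).unique ⟨h1, h3⟩ ⟨h2, h4⟩
  have hn0 : b0.image (fun i => -i) = b0 :=
    hu _ ⟨hs b0 hb0, mem_image.2 ⟨0, h0, neg_zero⟩⟩
  obtain ⟨T, hT, hB⟩ := exists_BB hN hv hh b0 (hP.1 b0 hb0) h0
    (fun x hx => by rw [← hn0]; exact mem_image_of_mem _ hx)
    (fun x hx hx' => hl x b0 hb0 hx hx')
  have inj := ph_inj hN hv hT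
  set pull : Finset (ZMod N) → Finset ℕ := fun b => (Icc 1 (2 * v)).filter (fun j => ph N v T j ∈ b)
    with hpull
  have mp : ∀ b j, j ∈ pull b ↔ j ∈ Icc 1 (2 * v) ∧ ph N v T j ∈ b := by
    intro b j; rw [hpull, mem_filter]
  have push : ∀ b ∈ P, b ≠ b0 → (pull b).image (ph N v T) = b := by
    intro b hb hne
    ext x
    rw [mem_image]
    constructor
    · rintro ⟨j, hj, rfl⟩; exact ((mp _ _).1 hj).2
    · intro hx
      have : x ∈ RR N v T := by
        by_contra q
        have : x ∈ b0 := by rw [← hB]; exact mem_BB.2 q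
        exact hne (uniq x b b0 hb hb0 hx this)
      obtain ⟨j, hj, rfl⟩ := mem_image.1 this
      exact ⟨j, (mp _ _).2 ⟨hj, hx⟩, rfl⟩
  have nb0 : ∀ j ∈ Icc 1 (2 * v), ph N v T j ∉ b0 := by
    intro j hj hm
    rw [← hB, mem_BB] at hm
    exact hm (mem_image_of_mem _ hj)
  set Q := (P.erase b0).image pull with hQdef
  have mQ : ∀ q, q ∈ Q ↔ ∃ b, b ∈ P ∧ b ≠ b0 ∧ pull b = q := by
    intro q
    rw [hQdef, mem_image]
    constructor
    · rintro ⟨b, hb, rfl⟩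
      exact ⟨b, (mem_erase.1 hb).2, (mem_erase.1 hb).1, rfl⟩
    · rintro ⟨b, hb, hne, rfl⟩
      exact ⟨b, mem_erase.2 ⟨hne, hb⟩, rfl⟩
  refine ⟨Q, T, ⟨⟨?_, ?_, ?_⟩, ?_⟩, hT, ?_, ?_⟩
  · intro q hq
    obtain ⟨b, hb, hne, rfl⟩ := (mQ q).1 hq
    rw [← hP.1 b hb, ← card_image_of_injOn (f := ph N v T) (s := pull b), push b hb hne]
    exact inj.mono (coe_subset.2 (filter_subset _ _))
  · intro q hq x hx
    obtain ⟨b, hb, hne, rfl⟩ := (mQ q).1 hq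
    exact ((mp _ _).1 hx).1
  · intro x hx
    obtain ⟨b, ⟨hb, hxb⟩, hub⟩ := hP.2 (ph N v T x)
    refine ⟨pull b, ⟨(mQ _).2 ⟨b, hb, ?_, rfl⟩, (mp _ _).2 ⟨hx, hxb⟩⟩, ?_⟩
    · rintro rfl; exact nb0 x hx hxb
    · rintro q ⟨hq, hxq⟩
      obtain ⟨b', hb', hne, rfl⟩ := (mQ q).1 hq
      rw [hub b' ⟨hb', ((mp _ _).1 hxq).2⟩]
  · intro q hq
    obtain ⟨b, hb, hne, rfl⟩ := (mQ q).1 hq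
    refine (mQ _).2 ⟨b.image (fun i => -i), hs b hb, ?_, ?_⟩
    · intro q
      rw [← hn0] at q
      exact hne (image_injective neg_injective q)
    · ext j
      rw [mp]
      constructor
      · rintro ⟨hj, hm⟩
        obtain ⟨y, hy, hye⟩ := mem_image.1 hm
        refine mem_image.2 ⟨shiftMod (2 * v) v j, (mp _ _).2 ⟨shift_mem hj, ?_⟩, shift_shift hj⟩
        rw [ph_shift hj, ← hye, neg_neg]; exact hy
      · intro hm
        obtain ⟨i, hi, rfl⟩ := mem_image.1 hm
        rw [mp] at hi
        refine ⟨shift_mem hi.1, ?_⟩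
        rw [ph_shift hi.1]
        exact mem_image_of_mem _ hi.2
  · intro j hj
    obtain ⟨hj1, q, hq, h1, h2⟩ := mem_filter.1 hj
    rw [mem_Icc] at hj1
    obtain ⟨b, hb, hne, rfl⟩ := (mQ q).1 hq
    by_contra hjT
    rw [mp] at h1 h2
    apply hl _ b hb h1.2
    have := h2.2
    rw [ph, if_pos (by omega), ee_succ_not hjT] at this
    rw [ph, if_pos (by omega)]
    push_cast at this
    exact this
  · ext b
    unfold FF
    rw [mem_insert, mem_image]
    constructor
    · rintro (rfl | ⟨q, hq, rfl⟩)
      · rw [hB]; exact hb0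
      · obtain ⟨b, hb, hne, rfl⟩ := (mQ q).1 hq
        have := push b hb hne
        simp only [this]; exact hb
    · intro hb
      by_cases hne : b = b0
      · left; rw [hne, hB]
      · right
        exact ⟨pull b, (mQ _).2 ⟨b, hb, hne, rfl⟩, push b hb hne⟩
end

lemma sector0 (v : ℕ) (Q : Finset (Finset ℕ)) : sectorLoops v Q 0 = (LL v Q).card := by
  unfold sectorLoops
  rw [← Set.ncard_coe_finset]
  congr 1
  ext i
  simp only [LL, Set.mem_setOf_eq, coe_filter, mem_Icc]
  constructor
  · rintro ⟨h1, h2, h3⟩; exact ⟨⟨by omega, by omega⟩, h3⟩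
  · rintro ⟨⟨h1, h2⟩, h3⟩; exact ⟨by omega, by omega, h3⟩

lemma sector1 {d v : ℕ} {Q : Finset (Finset ℕ)} (hQ : IsMSymLinear d 2 v Q) :
    sectorLoops v Q 1 = (LL v Q).card := by
  unfold sectorLoops
  rw [← card_image_of_injective (LL v Q) (add_left_injective v), ← Set.ncard_coe_finset]
  congr 1
  ext i
  simp only [LL, Set.mem_setOf_eq, coe_image, coe_filter, mem_Icc, Set.mem_image]
  constructor
  · rintro ⟨h1, h2, b, hb, h3, h4⟩
    refine ⟨i - v, ⟨⟨by omega, by omega⟩, _, hQ.2 b hb, mem_image.2 ⟨i, h3, ?_⟩,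
      mem_image.2 ⟨i + 1, h4, ?_⟩⟩, by omega⟩
    · unfold shiftMod; rw [if_neg (by omega)]; omega
    · unfold shiftMod; rw [if_neg (by omega)]; omega
  · rintro ⟨j, ⟨⟨h1, h2⟩, b, hb, h3, h4⟩, rfl⟩
    refine ⟨by omega, by omega, _, hQ.2 b hb, mem_image.2 ⟨j, h3, ?_⟩,
      mem_image.2 ⟨j + 1, h4, ?_⟩⟩
    · unfold shiftMod; rw [if_pos (by omega)]
    · unfold shiftMod; rw [if_pos (by omega)]; omega

lemma fin_sym (d v : ℕ) : {Q | IsMSymLinear d 2 v Q}.Finite := by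
  apply ((Icc 1 (2 * v)).powerset.powerset.finite_toSet).subset
  intro Q hQ
  rw [mem_coe, mem_powerset]
  intro q hq
  exact mem_powerset.2 (sub_Icc hQ hq)

lemma main_count {N v h : ℕ} (hN : N = 2 * (v + h)) (hv : 1 ≤ v) (hh : 1 ≤ h) :
    Set.ncard {P : Finset (Finset (ZMod N)) |
        IsChordDiagram N (2 * h) P ∧ ChordLoopless N P ∧
          ∀ b ∈ P, b.image (fun i => -i) ∈ P} =
      ∑ k ∈ Finset.range h, (v - 1 - k).choose (h - 1 - k) * numAtil (2 * h) 2 v k := by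
  have : NeZero N := ⟨by omega⟩
  set A := (fin_sym (2 * h) v).toFinset with hA
  have mA : ∀ Q, Q ∈ A ↔ IsMSymLinear (2 * h) 2 v Q := by intro Q; simp [hA]
  set X := (A ×ˢ (Icc 1 (v-1)).powersetCard (h-1)).filter (fun p => LL v p.1 ⊆ p.2) with hX
  have mX : ∀ Q T, (Q, T) ∈ X ↔ IsMSymLinear (2 * h) 2 v Q ∧ GS v h T ∧ LL v Q ⊆ T := by
    intro Q T
    rw [hX, mem_filter, mem_product, mA, mem_powersetCard, GS, and_assoc]
    have : T.card = h - 1 ↔ T.card + 1 = h := by omega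
    simp only [this]
  have img : {P : Finset (Finset (ZMod N)) |
        IsChordDiagram N (2 * h) P ∧ ChordLoopless N P ∧
          ∀ b ∈ P, b.image (fun i => -i) ∈ P} = FF N v '' (X : Set _) := by
    ext P
    constructor
    · rintro ⟨h1, h2, h3⟩
      obtain ⟨Q, T, a, b, c, e⟩ := FF_surj hN hv hh h1 h2 h3
      exact ⟨(Q, T), mem_coe.2 ((mX _ _).2 ⟨a, b, c⟩), e⟩
    · rintro ⟨⟨Q, T⟩, hp, rfl⟩
      have := (mX _ _).1 (mem_coe.1 hp)
      exact FF_mem hN hv this.1 this.2.1 this.2.2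
  rw [img, Set.ncard_image_of_injOn, Set.ncard_coe_finset]
  · have c1 : X.card = ∑ Q ∈ A, if (LL v Q).card ≤ h - 1 then
        (v - 1 - (LL v Q).card).choose (h - 1 - (LL v Q).card) else 0 := by
      rw [hX, card_filter, sum_product]
      apply sum_congr rfl
      intro Q _
      rw [← card_filter]
      have := card_sup (Icc 1 (v-1)) (LL v Q) (h-1) (filter_subset _ _)
      rw [Nat.card_Icc, Nat.add_sub_cancel] at this
      exact this
    rw [c1, ← sum_filter]
    have mt : ∀ x ∈ A.filter (fun Q => (LL v Q).card ≤ h - 1), (LL v x).card ∈ range h := by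
      intro x hx
      have := (mem_filter.1 hx).2
      rw [mem_range]; omega
    rw [← sum_fiberwise_of_maps_to mt]
    apply sum_congr rfl
    intro k hk
    rw [mem_range] at hk
    have c2 : numAtil (2 * h) 2 v k =
        ((A.filter (fun Q => (LL v Q).card ≤ h - 1)).filter (fun Q => (LL v Q).card = k)).card := by
      unfold numAtil
      rw [← Set.ncard_coe_finset]
      congr 1
      ext Q
      simp only [Set.mem_setOf_eq, coe_filter, mem_filter, mA]
      constructor
      · rintro ⟨h1, h2⟩
        have := h2 0 (by omega)
        rw [sector0] at this
        exact ⟨⟨h1, by omega⟩, this⟩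
      · rintro ⟨⟨h1, h2⟩, h3⟩
        refine ⟨h1, ?_⟩
        intro s hs
        rcases s with _ | _ | s
        · rw [sector0, h3]
        · rw [zero_add, sector1 h1, h3]
        · omega
    rw [c2, mul_comm, ← smul_eq_mul, ← sum_const]
    apply sum_congr rfl
    intro Q hQ
    rw [(mem_filter.1 hQ).2]
  · rintro ⟨Q, T⟩ hp ⟨Q', T'⟩ hp' he
    have a := (mX _ _).1 (mem_coe.1 hp)
    have b := (mX _ _).1 (mem_coe.1 hp')
    obtain ⟨rfl, rfl⟩ := FF_inj hN hv hh a.1 a.2.1 b.1 b.2.1 he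
    rfl

/-- for even `d ≥ 2` and `n ≥ 2`, the number of loopless generalized
chord diagrams of order `(n,d)` invariant under `i ↦ −i`. -/
theorem reflection_two_fixed_points (d : ℕ) (hd : 2 ≤ d) (hde : Even d)
    (n : ℕ) (hn : 2 ≤ n) :
    Set.ncard {P : Finset (Finset (ZMod (n * d))) |
        IsChordDiagram (n * d) d P ∧ ChordLoopless (n * d) P ∧
          ∀ b ∈ P, b.image (fun i => -i) ∈ P} =
      ∑ k ∈ Finset.range (d / 2),
        (d * (n - 1) / 2 - 1 - k).choose (d / 2 - 1 - k) *
          numAtil d 2 (d * (n - 1) / 2) k := by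
  obtain ⟨h, hh⟩ := hde
  have hh2 : d = 2 * h := by omega
  subst hh2
  clear hh
  obtain ⟨m, rfl⟩ : ∃ m, n = m + 2 := ⟨n - 2, by omega⟩
  have e1 : 2 * h * (m + 2 - 1) / 2 = h * (m + 1) := by
    rw [mul_assoc, Nat.mul_div_cancel_left _ (by norm_num)]; rfl
  have e2 : 2 * h / 2 = h := by omega
  rw [e1, e2]
  have h1 : 1 ≤ h := by omega
  exact main_count (by ring) (Nat.mul_pos h1 (by omega)) h1
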